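/- arXiv:1009.0096 — 5 statements merged into one kernel-verified Lean document; each statement's English description precedes it below -/
import Mathlib

section
/- Let N be a prime, m an integer with m² + m + 1 ≡ 0 (mod N), and h an integer not divisible by N. Then the following four conditions are equivalent: (i) ⟨h⟩ + ⟨hm⟩ < N; (ii) ⟨hm⟩ + ⟨hm²⟩ < N; (iii) ⟨hm²⟩ + ⟨h⟩ < N; (iv) ⟨h⟩ + ⟨hm⟩ + ⟨hm²⟩ = N. -/
/-!
Since `h + h m + h m² = h (m² + m + 1)`, the sum of the three residues is a multiple of `N`. As `N`
divides none of `h`, `h m`, `h m²`, each residue lies strictly between `0` and `N`, so the sum is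
`N` or `2 N`. In the first case every two of the residues sum to less than `N`; in the second every
two of them sum to more than `N`.
-/

/-- For a prime `N` and an integer `a` not divisible by `N`, `rep N a = a % N` is the
unique representative of `a` modulo `N` lying in `{1, 2, ..., N − 1}`. -/
def rep (N : ℕ) (a : ℤ) : ℤ := a % (N : ℤ)

/-- Let N be a prime, m an integer with m² + m + 1 ≡ 0 (mod N), and h an integer not
divisible by N. Then the following four conditions are equivalent:
(i) ⟨h⟩ + ⟨hm⟩ < N; (ii) ⟨hm⟩ + ⟨hm²⟩ < N; (iii) ⟨hm²⟩ + ⟨h⟩ < N;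
(iv) ⟨h⟩ + ⟨hm⟩ + ⟨hm²⟩ = N. -/
theorem stmt_3 (N : ℕ) (hN : N.Prime) (m : ℤ) (hm : (N : ℤ) ∣ (m ^ 2 + m + 1))
    (h : ℤ) (hh : ¬ (N : ℤ) ∣ h) :
    List.TFAE
      [rep N h + rep N (h * m) < (N : ℤ),
       rep N (h * m) + rep N (h * m ^ 2) < (N : ℤ),
       rep N (h * m ^ 2) + rep N h < (N : ℤ),
       rep N h + rep N (h * m) + rep N (h * m ^ 2) = (N : ℤ)] := by
  have hNp : (0 : ℤ) < N := by exact_mod_cast hN.pos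
  have hp : Prime (N : ℤ) := Nat.prime_iff_prime_int.mp hN
  have hnm : ¬ (N : ℤ) ∣ m := by
    intro hd
    have h1 : (N : ℤ) ∣ 1 := by
      have := dvd_sub hm (hd.mul_right (m + 1))
      ring_nf at this
      exact this
    exact hp.not_dvd_one h1
  have hpos : ∀ a : ℤ, ¬ (N : ℤ) ∣ a → 0 < rep N a ∧ rep N a < N := fun a ha =>
    ⟨lt_of_le_of_ne (Int.emod_nonneg a hNp.ne')
      (fun h0 => ha (Int.dvd_of_emod_eq_zero h0.symm)), Int.emod_lt_of_pos a hNp⟩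
  obtain ⟨ha0, ha1⟩ := hpos h hh
  obtain ⟨hb0, hb1⟩ := hpos (h * m) (hp.not_dvd_mul hh hnm)
  obtain ⟨hc0, hc1⟩ := hpos (h * m ^ 2)
    (hp.not_dvd_mul hh (fun hd => hnm (hp.dvd_of_dvd_pow hd)))
  have hsum : (N : ℤ) ∣ rep N h + rep N (h * m) + rep N (h * m ^ 2) := by
    have hmod : rep N h + rep N (h * m) + rep N (h * m ^ 2) ≡ h + h * m + h * m ^ 2 [ZMOD N] :=
      ((Int.mod_modEq _ _).add (Int.mod_modEq _ _)).add (Int.mod_modEq _ _)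
    refine hmod.dvd_iff.mpr ?_
    rw [show h + h * m + h * m ^ 2 = h * (m ^ 2 + m + 1) by ring]
    exact hm.mul_left h
  obtain ⟨k, hk⟩ := hsum
  have hk0 : 0 < k := by nlinarith
  have hk3 : k < 3 := by nlinarith
  have hk12 : k = 1 ∨ k = 2 := by omega
  rcases hk12 with rfl | rfl
  · tfae_have 1 ↔ 4 := by constructor <;> intro _ <;> linarith
    tfae_have 2 ↔ 4 := by constructor <;> intro _ <;> linarith
    tfae_have 3 ↔ 4 := by constructor <;> intro _ <;> linarith
    tfae_finish
  · tfae_have 1 ↔ 4 := by constructor <;> intro _ <;> linarith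
    tfae_have 2 ↔ 4 := by constructor <;> intro _ <;> linarith
    tfae_have 3 ↔ 4 := by constructor <;> intro _ <;> linarith
    tfae_finish
end

section
/- Let N be a prime with N ≡ 1 (mod 3) and m an integer with m² + m + 1 ≡ 0 (mod N). For every integer h not divisible by N, exactly one of h and N − h satisfies ⟨·⟩ + ⟨·m⟩ + ⟨·m²⟩ = N; consequently the set {h ∈ {1, ..., N − 1} : h + ⟨hm⟩ + ⟨hm²⟩ = N} has exactly (N − 1)/2 elements. -/
theorem rep_pos {N : ℕ} (hN : N.Prime) {a : ℤ} (ha : ¬ (N : ℤ) ∣ a) : 0 < rep N a := by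
  have hpos : (0 : ℤ) < N := by exact_mod_cast hN.pos
  have h0 := Int.emod_nonneg a hpos.ne'
  have h1 : a % (N : ℤ) ≠ 0 := fun h => ha (Int.dvd_of_emod_eq_zero h)
  unfold rep
  omega

theorem rep_lt {N : ℕ} (hN : N.Prime) (a : ℤ) : rep N a < N :=
  Int.emod_lt_of_pos a (by exact_mod_cast hN.pos)

theorem dvd_sub_rep (N : ℕ) (a : ℤ) : (N : ℤ) ∣ a - rep N a :=
  Int.dvd_self_sub_emod

/-- Characterization of `rep N a` by its range and its class modulo `N`. -/
theorem rep_eq_of {N : ℕ} {a r : ℤ} (h0 : 0 ≤ r) (h1 : r < N) (h : (N : ℤ) ∣ a - r) :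
    rep N a = r := by
  have h2 : a % (N : ℤ) = r % (N : ℤ) := Int.emod_eq_emod_iff_emod_sub_eq_zero.2
    (Int.emod_eq_zero_of_dvd h)
  unfold rep
  rw [h2, Int.emod_eq_of_lt h0 h1]

theorem rep_reflect {N : ℕ} (hN : N.Prime) {a b : ℤ} (ha : ¬ (N : ℤ) ∣ a)
    (hab : (N : ℤ) ∣ a + b) : rep N b = N - rep N a := by
  have h0 := rep_pos hN ha
  have h1 := rep_lt hN a
  apply rep_eq_of (by omega) (by omega)
  have h2 := (hab.sub (dvd_sub_rep N a)).sub (dvd_refl (N : ℤ))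
  have h3 : a + b - (a - rep N a) - N = b - (N - rep N a) := by ring
  rwa [h3] at h2

theorem not_dvd_of_dvd {N : ℕ} (hN : N.Prime) {m : ℤ} (hm : (N : ℤ) ∣ m ^ 2 + m + 1) :
    ¬ (N : ℤ) ∣ m := by
  intro h
  have h1 : (N : ℤ) ∣ 1 := by
    have h2 := hm.sub (h.mul_right (m + 1))
    have h3 : m ^ 2 + m + 1 - m * (m + 1) = 1 := by ring
    rwa [h3] at h2
  exact (Nat.prime_iff_prime_int.1 hN).not_isUnit (isUnit_of_dvd_one h1)

theorem not_dvd_mul_pow {N : ℕ} (hN : N.Prime) {m h : ℤ} (hm : (N : ℤ) ∣ m ^ 2 + m + 1)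
    (hh : ¬ (N : ℤ) ∣ h) (k : ℕ) : ¬ (N : ℤ) ∣ h * m ^ k := by
  have hp := Nat.prime_iff_prime_int.1 hN
  intro hd
  rcases hp.dvd_or_dvd hd with h1 | h1
  · exact hh h1
  · exact not_dvd_of_dvd hN hm (hp.dvd_of_dvd_pow h1)

theorem rep_sum_eq_or {N : ℕ} (hN : N.Prime) {m h : ℤ} (hm : (N : ℤ) ∣ m ^ 2 + m + 1)
    (hh : ¬ (N : ℤ) ∣ h) :
    rep N h + rep N (h * m) + rep N (h * m ^ 2) = N ∨
      rep N h + rep N (h * m) + rep N (h * m ^ 2) = 2 * N := by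
  have hpos : (0 : ℤ) < N := by exact_mod_cast hN.pos
  have p0 := rep_pos hN hh
  have p1 := rep_pos hN (by simpa using not_dvd_mul_pow hN hm hh 1 : ¬ (N : ℤ) ∣ h * m)
  have p2 := rep_pos hN (not_dvd_mul_pow hN hm hh 2)
  have l0 := rep_lt hN h
  have l1 := rep_lt hN (h * m)
  have l2 := rep_lt hN (h * m ^ 2)
  have hd : (N : ℤ) ∣ rep N h + rep N (h * m) + rep N (h * m ^ 2) := by
    have h1 := (((hm.mul_left h).sub (dvd_sub_rep N h)).sub (dvd_sub_rep N (h * m))).sub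
      (dvd_sub_rep N (h * m ^ 2))
    have h2 : h * (m ^ 2 + m + 1) - (h - rep N h) - (h * m - rep N (h * m))
        - (h * m ^ 2 - rep N (h * m ^ 2)) = rep N h + rep N (h * m) + rep N (h * m ^ 2) := by
      ring
    rwa [h2] at h1
  obtain ⟨c, hc⟩ := hd
  have c0 : 0 < c := by nlinarith
  have c3 : c < 3 := by nlinarith
  rw [hc]
  obtain rfl | rfl : c = 1 ∨ c = 2 := by omega
  · left; ring
  · right; ring

theorem rep_sum_reflect {N : ℕ} (hN : N.Prime) {m h : ℤ} (hm : (N : ℤ) ∣ m ^ 2 + m + 1)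
    (hh : ¬ (N : ℤ) ∣ h) :
    rep N (N - h) + rep N ((N - h) * m) + rep N ((N - h) * m ^ 2) =
      3 * N - (rep N h + rep N (h * m) + rep N (h * m ^ 2)) := by
  rw [rep_reflect hN hh ⟨1, by ring⟩,
    rep_reflect hN (by simpa using not_dvd_mul_pow hN hm hh 1 : ¬ (N : ℤ) ∣ h * m)
      (b := (N - h) * m) ⟨m, by ring⟩,
    rep_reflect hN (not_dvd_mul_pow hN hm hh 2) (b := (N - h) * m ^ 2) ⟨m ^ 2, by ring⟩]
  ring

/-- Let N be a prime with N ≡ 1 (mod 3) and m an integer with m² + m + 1 ≡ 0 (mod N).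
For every integer h not divisible by N, exactly one of h and N − h satisfies
⟨·⟩ + ⟨·m⟩ + ⟨·m²⟩ = N; consequently the set
{h ∈ {1, ..., N − 1} : h + ⟨hm⟩ + ⟨hm²⟩ = N} has exactly (N − 1)/2 elements. -/
theorem stmt_4 (N : ℕ) (hN : N.Prime) (h3 : N % 3 = 1) (m : ℤ)
    (hm : (N : ℤ) ∣ (m ^ 2 + m + 1)) :
    (∀ h : ℤ, ¬ (N : ℤ) ∣ h →
      Xor' (rep N h + rep N (h * m) + rep N (h * m ^ 2) = (N : ℤ))
        (rep N ((N : ℤ) - h) + rep N (((N : ℤ) - h) * m)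
          + rep N (((N : ℤ) - h) * m ^ 2) = (N : ℤ))) ∧
    ((Finset.Icc 1 (N - 1)).filter
      (fun h : ℕ => (h : ℤ) + rep N ((h : ℤ) * m) + rep N ((h : ℤ) * m ^ 2)
        = (N : ℤ))).card = (N - 1) / 2 := by
  have hpos : (0 : ℤ) < N := by exact_mod_cast hN.pos
  have hx : ∀ h : ℤ, ¬ (N : ℤ) ∣ h →
      Xor' (rep N h + rep N (h * m) + rep N (h * m ^ 2) = (N : ℤ))
        (rep N ((N : ℤ) - h) + rep N (((N : ℤ) - h) * m)
          + rep N (((N : ℤ) - h) * m ^ 2) = (N : ℤ)) := by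
    intro h hh
    rw [rep_sum_reflect hN hm hh]
    rcases rep_sum_eq_or hN hm hh with e | e <;> rw [e]
    · exact Or.inl ⟨rfl, by omega⟩
    · exact Or.inr ⟨by omega, by omega⟩
  refine ⟨hx, ?_⟩
  set P : ℕ → Prop := fun h : ℕ =>
    (h : ℤ) + rep N ((h : ℤ) * m) + rep N ((h : ℤ) * m ^ 2) = (N : ℤ) with hP
  have key : ∀ h ∈ Finset.Icc 1 (N - 1), (P (N - h) ↔ ¬ P h) := by
    intro h hmem
    rw [Finset.mem_Icc] at hmem
    have hh : ¬ (N : ℤ) ∣ (h : ℤ) := by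
      intro hd
      have := Nat.le_of_dvd (by omega) (Int.natCast_dvd_natCast.1 hd)
      omega
    have r1 : rep N (h : ℤ) = h := rep_eq_of (by omega) (by omega) (by simp)
    have r2 : rep N ((N : ℤ) - h) = N - h := rep_eq_of (by omega) (by omega) (by simp)
    have hc : ((N - h : ℕ) : ℤ) = (N : ℤ) - h := by omega
    have := hx h hh
    rw [r1, r2] at this
    simp only [hP, hc]
    rcases this with ⟨a, b⟩ | ⟨a, b⟩
    · exact ⟨fun c => absurd c b, fun c => absurd a c⟩
    · exact ⟨fun _ => b, fun _ => a⟩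
  have hcard : ((Finset.Icc 1 (N - 1)).filter P).card
      = ((Finset.Icc 1 (N - 1)).filter (fun h => ¬ P h)).card := by
    apply Finset.card_nbij' (fun h => N - h) (fun h => N - h)
    · intro h hmem
      simp only [Finset.coe_filter, Set.mem_ofPred_eq] at hmem ⊢
      have k := key h hmem.1
      have := Finset.mem_Icc.1 hmem.1
      exact ⟨Finset.mem_Icc.2 ⟨by omega, by omega⟩, fun c => k.1 c hmem.2⟩
    · intro h hmem
      simp only [Finset.coe_filter, Set.mem_ofPred_eq] at hmem ⊢
      have k := key h hmem.1
      have := Finset.mem_Icc.1 hmem.1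
      exact ⟨Finset.mem_Icc.2 ⟨by omega, by omega⟩, k.2 hmem.2⟩
    · intro h hmem
      simp only [Finset.coe_filter, Set.mem_ofPred_eq, Finset.mem_Icc] at hmem
      show N - (N - h) = h
      omega
    · intro h hmem
      simp only [Finset.coe_filter, Set.mem_ofPred_eq, Finset.mem_Icc] at hmem
      show N - (N - h) = h
      omega
  have htot := Finset.card_filter_add_card_filter_not (s := Finset.Icc 1 (N - 1)) P
  rw [Nat.card_Icc] at htot
  have hfin : ((Finset.Icc 1 (N - 1)).filter P).card = (N - 1) / 2 := by omega
  exact hfin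
end

section
/- Let N ≥ 2 be an integer and let a, b be integers with 1 ≤ a ≤ N − 1 and 1 ≤ b ≤ N − 1. Then ∫₀¹ t^{a−1} (1 − t^N)^{(b−N)/N} dt = Γ(a/N) Γ(b/N) / (N · Γ((a+b)/N)), where Γ is the real Gamma function; equivalently, the integral of the 1-form x^{a−1} y^{b−1} dx / y^{N−1} along the path t ↦ (t, (1 − t^N)^{1/N}), t ∈ [0,1], equals B(a/N, b/N)/N, where B(u,v) = Γ(u)Γ(v)/Γ(u+v) is the Beta function. -/
/-!
The substitution `u = t ^ N` maps `(0, 1)` bijectively onto itself and turns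
`(1 / N) * ∫ u ^ (a / N - 1) * (1 - u) ^ (b / N - 1) du` into the integral of the theorem, because
`N * t ^ (N - 1) * (t ^ N) ^ (a / N - 1) = N * t ^ (a - 1)`. The integral in `u` is the real Beta
integral, which Mathlib evaluates in terms of `Real.Gamma`.
-/

open MeasureTheory Set in
/-- Euler's Beta integral over the reals, with the open interval as domain. -/
lemma integral_Ioo_beta {p q : ℝ} (hp : 0 < p) (hq : 0 < q) :
    ∫ u in Ioo (0:ℝ) 1, u ^ (p - 1) * (1 - u) ^ (q - 1)
      = Real.Gamma p * Real.Gamma q / Real.Gamma (p + q) := by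
  have h := ProbabilityTheory.beta_eq_betaIntegralReal p q hp hq
  rw [ProbabilityTheory.beta, Complex.betaIntegral,
    intervalIntegral.integral_of_le zero_le_one, integral_Ioc_eq_integral_Ioo] at h
  rw [h]
  have hcast : ∫ u in Ioo (0:ℝ) 1, (u:ℂ) ^ ((p:ℂ) - 1) * (1 - (u:ℂ)) ^ ((q:ℂ) - 1)
      = ∫ u in Ioo (0:ℝ) 1, ((u ^ (p - 1) * (1 - u) ^ (q - 1) : ℝ) : ℂ) := by
    refine setIntegral_congr_fun measurableSet_Ioo fun u hu => ?_
    rw [Complex.ofReal_mul, Complex.ofReal_cpow hu.1.le, Complex.ofReal_cpow (by linarith [hu.2])]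
    push_cast
    rfl
  rw [hcast, integral_complex_ofReal, Complex.ofReal_re]

lemma image_pow_Ioo_zero_one {N : ℕ} (hN : N ≠ 0) :
    (fun t : ℝ => t ^ N) '' Set.Ioo 0 1 = Set.Ioo 0 1 := by
  ext u
  constructor
  · rintro ⟨t, ht, rfl⟩
    exact ⟨pow_pos ht.1 N, pow_lt_one₀ ht.1.le ht.2 hN⟩
  · intro hu
    refine ⟨u ^ ((N : ℝ)⁻¹), ⟨Real.rpow_pos_of_pos hu.1 _, ?_⟩, ?_⟩
    · exact Real.rpow_lt_one hu.1.le hu.2 (by positivity)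
    · exact Real.rpow_inv_natCast_pow hu.1.le hN


/-- Let N ≥ 2 be an integer and let a, b be integers with 1 ≤ a ≤ N − 1 and
1 ≤ b ≤ N − 1. Then ∫₀¹ t^{a−1} (1 − t^N)^{(b−N)/N} dt
= Γ(a/N) Γ(b/N) / (N · Γ((a+b)/N)), where Γ is the real Gamma function. This is the
integral of the 1-form x^{a−1} y^{b−1} dx / y^{N−1} along the path
t ↦ (t, (1 − t^N)^{1/N}), t ∈ [0,1], i.e. it equals B(a/N, b/N)/N, where
B(u,v) = Γ(u)Γ(v)/Γ(u+v) is the Beta function. -/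
theorem stmt_6 (N : ℕ) (hN : 2 ≤ N) (a b : ℕ)
    (ha1 : 1 ≤ a) (ha2 : a ≤ N - 1) (hb1 : 1 ≤ b) (hb2 : b ≤ N - 1) :
    ∫ t in (0:ℝ)..1, t ^ (a - 1) * (1 - t ^ N) ^ (((b : ℝ) - (N : ℝ)) / (N : ℝ))
      = Real.Gamma ((a : ℝ) / N) * Real.Gamma ((b : ℝ) / N)
        / ((N : ℝ) * Real.Gamma (((a : ℝ) + (b : ℝ)) / N)) := by
  have hN0 : N ≠ 0 := by omega
  have hNr : (N : ℝ) ≠ 0 := by exact_mod_cast hN0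
  have hNpos : (0:ℝ) < N := by positivity
  have hp : (0:ℝ) < (a : ℝ) / N := div_pos (by exact_mod_cast ha1) hNpos
  have hq : (0:ℝ) < (b : ℝ) / N := div_pos (by exact_mod_cast hb1) hNpos
  have hbeta := integral_Ioo_beta hp hq
  have hsub := MeasureTheory.integral_image_eq_integral_abs_deriv_smul
    (s := Set.Ioo (0:ℝ) 1) (f := fun t : ℝ => t ^ N) (f' := fun t => N * t ^ (N - 1))
    measurableSet_Ioo (fun t _ => (hasDerivAt_pow N t).hasDerivWithinAt)
    (fun s hs t ht h => (pow_left_inj₀ hs.1.le ht.1.le hN0).1 h)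
    (fun u : ℝ => u ^ ((a : ℝ) / N - 1) * (1 - u) ^ ((b : ℝ) / N - 1))
  rw [image_pow_Ioo_zero_one hN0, hbeta] at hsub
  have hcongr : ∫ t in Set.Ioo (0:ℝ) 1, |(N : ℝ) * t ^ (N - 1)| •
        ((t ^ N) ^ ((a : ℝ) / N - 1) * (1 - t ^ N) ^ ((b : ℝ) / N - 1))
      = ∫ t in Set.Ioo (0:ℝ) 1, (N : ℝ) *
        (t ^ (a - 1) * (1 - t ^ N) ^ (((b : ℝ) - (N : ℝ)) / (N : ℝ))) := by
    refine MeasureTheory.setIntegral_congr_fun measurableSet_Ioo fun t ht => ?_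
    have ht0 : (0:ℝ) < t := ht.1
    have hexp : t ^ (N - 1) * (t ^ N) ^ ((a : ℝ) / N - 1) = t ^ (a - 1) := by
      rw [← Real.rpow_natCast t (N - 1), ← Real.rpow_natCast t N, ← Real.rpow_natCast t (a - 1),
        ← Real.rpow_mul ht0.le, ← Real.rpow_add ht0, Nat.cast_sub (by omega), Nat.cast_sub ha1]
      congr 1
      field_simp
      push_cast
      ring
    simp only [smul_eq_mul]
    rw [abs_of_nonneg (by positivity), ← hexp, sub_div, div_self hNr]
    ring
  rw [hcongr, MeasureTheory.integral_const_mul] at hsub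
  rw [intervalIntegral.integral_of_le zero_le_one, MeasureTheory.integral_Ioc_eq_integral_Ioo,
    add_div, mul_comm (N : ℝ), ← div_div, hsub, mul_div_cancel_left₀ _ hNr]
end

section
/- Let N ≥ 4 be an integer, ζ = exp(2π√(−1)/N), let a, b be integers with 1 ≤ a, b ≤ N − 1, and let i, j be integers. For integers p, q define the complex number J(p,q) = ∫₀¹ ζ^{p(a−1)} t^{a−1} · ζ^{q(b−N)} (1 − t^N)^{(b−N)/N} · ζ^{p} dt (the integral of x^{a−1} y^{b−1} dx / y^{N−1} along the path t ↦ (ζ^p t, ζ^q (1 − t^N)^{1/N})). Then J(i,j) − J(i, j+1) + J(i+1, j+1) − J(i+1, j) = B(a/N, b/N) · (1 − ζ^a)(1 − ζ^b) · ζ^{ai+bj} / N, where B(u,v) = Γ(u)Γ(v)/Γ(u+v). -/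
/-!
Pulling the roots of unity out of the integral gives `J p q = ζ ^ (a p + b q) * I`, where `ζ ^ N = 1`
is used to replace `ζ ^ (q (b - N))` by `ζ ^ (q b)`, and `I = ∫₀¹ t ^ (a-1) (1 - t ^ N) ^ ((b-N)/N) dt`.
The substitution `u = t ^ N` turns `I` into `B(a/N, b/N) / N` (`integral_eq_beta_div`), and the
alternating sum of the four prefactors is
`ζ ^ (a i + b j) * (1 - ζ ^ b + ζ ^ (a + b) - ζ ^ a) = ζ ^ (a i + b j) * (1 - ζ ^ a) * (1 - ζ ^ b)`.
-/

open MeasureTheory Set in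
theorem integral_eq_beta_div (N : ℕ) (hN : 0 < N) (a b : ℕ) (ha : 1 ≤ a) (hb : 1 ≤ b) :
    ∫ t in (0:ℝ)..1, (t : ℂ) ^ (a - 1) *
        (((1 - t ^ N) ^ (((b : ℝ) - (N : ℝ)) / (N : ℝ)) : ℝ) : ℂ) =
      ((Real.Gamma ((a : ℝ) / N) * Real.Gamma ((b : ℝ) / N)
          / Real.Gamma (((a : ℝ) + (b : ℝ)) / N) : ℝ) : ℂ) / N := by
  have hN0 : (0 : ℝ) < N := by exact_mod_cast hN
  have hNc : (N : ℂ) ≠ 0 := by exact_mod_cast hN.ne'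
  have ha0 : (0 : ℝ) < a := by exact_mod_cast ha
  have hb0 : (0 : ℝ) < b := by exact_mod_cast hb
  have hbeta := Complex.betaIntegral_eq_Gamma_mul_div (((a : ℝ) / N : ℝ) : ℂ)
    (((b : ℝ) / N : ℝ) : ℂ)
    (by rw [Complex.ofReal_re]; positivity) (by rw [Complex.ofReal_re]; positivity)
  rw [← Complex.ofReal_add, Complex.Gamma_ofReal, Complex.Gamma_ofReal, Complex.Gamma_ofReal,
    ← add_div] at hbeta
  have himg : (fun t : ℝ => t ^ N) '' Ioo 0 1 = Ioo 0 1 := by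
    ext u
    constructor
    · rintro ⟨t, ⟨h0, h1⟩, rfl⟩
      exact ⟨pow_pos h0 N, pow_lt_one₀ h0.le h1 hN.ne'⟩
    · rintro ⟨h0, h1⟩
      exact ⟨u ^ ((N : ℝ)⁻¹), ⟨Real.rpow_pos_of_pos h0 _,
        Real.rpow_lt_one h0.le h1 (by positivity)⟩, Real.rpow_inv_natCast_pow h0.le hN.ne'⟩
  have hsub := integral_image_eq_integral_abs_deriv_smul (s := Ioo (0 : ℝ) 1)
    (f := fun t : ℝ => t ^ N) (f' := fun t => N * t ^ (N - 1)) measurableSet_Ioo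
    (fun x _ => (hasDerivAt_pow N x).hasDerivWithinAt)
    (fun x hx y hy h => (pow_left_inj₀ hx.1.le hy.1.le hN.ne').1 h)
    (fun u : ℝ => (u : ℂ) ^ ((((a : ℝ) / N : ℝ) : ℂ) - 1) *
      (1 - (u : ℂ)) ^ ((((b : ℝ) / N : ℝ) : ℂ) - 1))
  rw [himg] at hsub
  rw [Complex.betaIntegral, intervalIntegral.integral_of_le zero_le_one,
    integral_Ioc_eq_integral_Ioo, hsub] at hbeta
  rw [eq_div_iff hNc, mul_comm]
  push_cast at hbeta ⊢
  rw [← hbeta, intervalIntegral.integral_of_le zero_le_one, integral_Ioc_eq_integral_Ioo,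
    ← integral_const_mul]
  refine setIntegral_congr_fun measurableSet_Ioo fun t ht => ?_
  obtain ⟨h0, h1⟩ := ht
  have h1' : 0 ≤ 1 - t ^ N := sub_nonneg.2 (pow_le_one₀ h0.le h1.le)
  -- both sides are real, so the complex powers reduce to `Real.rpow`
  have e1 : ((t : ℂ) ^ N) ^ ((a : ℂ) / N - 1) = (((t ^ N) ^ ((a : ℝ) / N - 1) : ℝ) : ℂ) := by
    rw [Complex.ofReal_cpow (by positivity)]; push_cast; rfl
  have e2 : (1 - (t : ℂ) ^ N) ^ ((b : ℂ) / N - 1) = (((1 - t ^ N) ^ ((b : ℝ) / N - 1) : ℝ) : ℂ) := by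
    rw [Complex.ofReal_cpow h1']; push_cast; rfl
  have e3 : t ^ (N - 1) * (t ^ N) ^ ((a : ℝ) / N - 1) = t ^ (a - 1) := by
    rw [← Real.rpow_natCast t N, ← Real.rpow_mul h0.le, ← Real.rpow_natCast, ← Real.rpow_natCast,
      ← Real.rpow_add h0, Nat.cast_sub hN, Nat.cast_sub ha]
    congr 1
    field_simp
    push_cast
    ring
  have e4 : ((b : ℝ) - N) / N = (b : ℝ) / N - 1 := by field_simp
  have habs : |(N : ℝ) * t ^ (N - 1)| = N * t ^ (N - 1) := abs_of_nonneg (by positivity)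
  simp only [Complex.ofReal_pow, habs, e1, e2, e4, Complex.real_smul]
  rw [← Complex.ofReal_pow, ← e3]
  push_cast
  ring


open Complex in
/-- Let N ≥ 4 be an integer, ζ = exp(2π√(−1)/N), let a, b be integers with
1 ≤ a, b ≤ N − 1, and let i, j be integers. For integers p, q define the complex number
J(p,q) = ∫₀¹ ζ^{p(a−1)} t^{a−1} · ζ^{q(b−N)} (1 − t^N)^{(b−N)/N} · ζ^{p} dt
(the integral of x^{a−1} y^{b−1} dx / y^{N−1} along the path
t ↦ (ζ^p t, ζ^q (1 − t^N)^{1/N})). Then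
J(i,j) − J(i, j+1) + J(i+1, j+1) − J(i+1, j)
= B(a/N, b/N) · (1 − ζ^a)(1 − ζ^b) · ζ^{ai+bj} / N, where B(u,v) = Γ(u)Γ(v)/Γ(u+v). -/
theorem stmt_7 (N : ℕ) (hN : 4 ≤ N) (a b : ℕ)
    (ha1 : 1 ≤ a) (ha2 : a ≤ N - 1) (hb1 : 1 ≤ b) (hb2 : b ≤ N - 1) (i j : ℤ)
    (ζ : ℂ) (hζ : ζ = Complex.exp (2 * Real.pi * Complex.I / N))
    (J : ℤ → ℤ → ℂ)
    (hJ : ∀ p q : ℤ, J p q =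
      ∫ t in (0:ℝ)..1,
        ζ ^ (p * ((a : ℤ) - 1)) * (t : ℂ) ^ (a - 1) *
          (ζ ^ (q * ((b : ℤ) - (N : ℤ))) *
            (((1 - t ^ N) ^ (((b : ℝ) - (N : ℝ)) / (N : ℝ)) : ℝ) : ℂ)) * ζ ^ p) :
    J i j - J i (j + 1) + J (i + 1) (j + 1) - J (i + 1) j =
      ((Real.Gamma ((a : ℝ) / N) * Real.Gamma ((b : ℝ) / N)
          / Real.Gamma (((a : ℝ) + (b : ℝ)) / N) : ℝ) : ℂ) *
        ((1 - ζ ^ a) * (1 - ζ ^ b)) * ζ ^ ((a : ℤ) * i + (b : ℤ) * j) / (N : ℂ) := by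
  have hN0 : 0 < N := by omega
  have hNc : (N : ℂ) ≠ 0 := by exact_mod_cast hN0.ne'
  have hz : ζ ≠ 0 := hζ ▸ Complex.exp_ne_zero _
  have hzN : ζ ^ N = 1 := by
    rw [hζ, ← Complex.exp_nat_mul, mul_div_cancel₀ _ hNc, Complex.exp_two_pi_mul_I]
  have key : ∀ p q : ℤ, J p q = ζ ^ ((a : ℤ) * p + (b : ℤ) * q) *
      (((Real.Gamma ((a : ℝ) / N) * Real.Gamma ((b : ℝ) / N)
          / Real.Gamma (((a : ℝ) + (b : ℝ)) / N) : ℝ) : ℂ) / N) := by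
    intro p q
    rw [hJ, ← integral_eq_beta_div N hN0 a b ha1 hb1, ← intervalIntegral.integral_const_mul]
    congr 1
    funext t
    have hpow : ζ ^ ((a : ℤ) * p + (b : ℤ) * q) =
        ζ ^ (p * ((a : ℤ) - 1)) * ζ ^ (q * ((b : ℤ) - (N : ℤ))) * ζ ^ p := by
      have hq : ζ ^ ((N : ℤ) * q) = 1 := by rw [zpow_mul, zpow_natCast, hzN, one_zpow]
      rw [← mul_one (_ * _ * _), ← hq, ← zpow_add₀ hz, ← zpow_add₀ hz, ← zpow_add₀ hz]
      congr 1
      ring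
    rw [hpow]
    ring
  simp only [key, mul_add, mul_one, zpow_add₀ hz, zpow_natCast]
  ring
end

section
/- Let f(7) be the real number defined by f(7) = 2·7⁶ · ∑_{h ∈ {1,2,4}} (Γ((7 − ⟨2h⟩)/7) · Γ((7 − ⟨4h⟩)/7) / Γ(⟨2h⟩/7))² · ₃F₂(h/7, h/7, ⟨4h⟩/7; 1, 1; 1). Then for every integer k with 1 ≤ k ≤ 2, the real number k! · 7^{4k−4} · f(7) is not an integer. -/
/-!
The proof is a rigorous numerical evaluation. The multiplier for `k = 2` is `4802 = 2! * 7 ^ 4`, and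
`f7_bounds` shows that `4802 * f7` lies strictly between the consecutive integers `3348482649` and
`3348482650`. This settles `k = 2`, and also `k = 1`: if `f7` were an integer, so would be
`4802 * f7`. A relative precision of about `5e-11` is needed, so neither the slowly convergent
`₃F₂` series nor Euler's product for `Γ` can simply be truncated.

* Series. With `r n` the ratio of consecutive terms, the quotient `T n` of the tail from `n` on by
  its first term satisfies `T n = 1 + r n * T (n + 1)`. A truncated expansion of `T` in powers of
  `1/n`, with its last coefficient shifted slightly up or down, is a super- or subsolution of this
  recursion, and telescoping gives the enclosure (`tsum_enclosure`, `F32_enclosure`).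
* Gamma quotients. With `G n = Γ(a + n) Γ(b + n) / (Γ(c + n) Γ(1 + n))` and `e = 7 (c + 1 - a - b)`,
  an integer in the three cases, `G n ^ 7 * n ^ e` tends to `1` and has a rational one-step ratio.
  Comparing it with a truncated expansion `R n → 1` whose ratio to it is monotone encloses `G 128`
  (`le_of_ratio_mono`, `gq_enclosure`), hence `G 0 = Γ(a) Γ(b) / Γ(c)` by the functional equation.

Both kinds of one-step comparison are inequalities between rational functions.
-/

/-- The Pochhammer symbol `(α, n) = Γ(α + n)/Γ(α)`, for a real `α` and natural `n`. -/
noncomputable def poch (a : ℝ) (n : ℕ) : ℝ := Real.Gamma (a + n) / Real.Gamma a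

/-- The generalized hypergeometric series ₃F₂(α₁, α₂, α₃; β₁, β₂; x) at x = 1. -/
noncomputable def F32 (a₁ a₂ a₃ b₁ b₂ : ℝ) : ℝ :=
  ∑' n : ℕ, poch a₁ n * poch a₂ n * poch a₃ n / (poch b₁ n * poch b₂ n * poch 1 n)

/-- The value f(7) = f(7,1) of the paper for the Klein quartic C₇^{1,2}, with m = 2. -/
noncomputable def f7 : ℝ :=
  2 * 7 ^ 6 * ∑ h ∈ ({1, 2, 4} : Finset ℕ),
    (Real.Gamma (((7 - (2 * h) % 7 : ℕ) : ℝ) / 7) *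
        Real.Gamma (((7 - (4 * h) % 7 : ℕ) : ℝ) / 7) /
        Real.Gamma ((((2 * h) % 7 : ℕ) : ℝ) / 7)) ^ 2 *
      F32 ((h : ℝ) / 7) ((h : ℝ) / 7) ((((4 * h) % 7 : ℕ) : ℝ) / 7) 1 1

open Filter Topology

/-! ### Pochhammer symbols and Gamma asymptotics -/

lemma poch_succ {a : ℝ} (ha : 0 < a) (n : ℕ) : poch a (n + 1) = (a + n) * poch a n := by
  unfold poch
  rw [Nat.cast_succ, ← add_assoc, Real.Gamma_add_one (by positivity)]
  ring

lemma poch_zero {a : ℝ} (ha : 0 < a) : poch a 0 = 1 := by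
  unfold poch
  rw [Nat.cast_zero, add_zero, div_self (Real.Gamma_pos_of_pos ha).ne']

lemma poch_pos {a : ℝ} (ha : 0 < a) (n : ℕ) : 0 < poch a n :=
  div_pos (Real.Gamma_pos_of_pos (by positivity)) (Real.Gamma_pos_of_pos ha)

lemma Gamma_add_nat_eq_prod {x : ℝ} (hx : 0 < x) (n : ℕ) :
    Real.Gamma (x + n) = Real.Gamma x * ∏ j ∈ Finset.range n, (x + j) := by
  induction n with
  | zero => simp
  | succ n ih =>
    rw [Nat.cast_succ, ← add_assoc, Real.Gamma_add_one (by positivity), ih,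
      Finset.prod_range_succ]
    ring

/-- Euler's limit formula, read as the asymptotic `Γ(x + n) ~ Γ(n + 1) n ^ (x - 1)`. -/
lemma tendsto_Gamma_ratio {x : ℝ} (hx : 0 < x) :
    Tendsto (fun n : ℕ => Real.Gamma (x + n) / (Real.Gamma (1 + n) * (n : ℝ) ^ (x - 1)))
      atTop (𝓝 1) := by
  have hG : Real.Gamma x ≠ 0 := (Real.Gamma_pos_of_pos hx).ne'
  have h1 : Tendsto (fun n : ℕ => Real.Gamma x / Real.GammaSeq x n) atTop (𝓝 1) := by
    simpa [div_self hG, Pi.div_def] using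
      (tendsto_const_nhds (x := Real.Gamma x)).div (Real.GammaSeq_tendsto_Gamma x) hG
  have h2 : Tendsto (fun n : ℕ => (n : ℝ) / (n + x)) atTop (𝓝 1) :=
    tendsto_natCast_div_add_atTop x
  have h3 := h1.mul h2
  rw [mul_one] at h3
  refine h3.congr' ?_
  filter_upwards [eventually_ge_atTop 1] with n hn
  have hn' : (0 : ℝ) < n := by exact_mod_cast hn
  have hp : (0 : ℝ) < ∏ j ∈ Finset.range n, (x + j) :=
    Finset.prod_pos fun j _ => by positivity
  have hxn : (0 : ℝ) < (n : ℝ) ^ x := Real.rpow_pos_of_pos hn' x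
  have hf : (0 : ℝ) < (n.factorial : ℝ) := by exact_mod_cast n.factorial_pos
  rw [Gamma_add_nat_eq_prod hx, add_comm (1 : ℝ), Real.Gamma_nat_eq_factorial,
    Real.rpow_sub_one hn'.ne', Real.GammaSeq, Finset.prod_range_succ]
  have : (0 : ℝ) < x + n := by positivity
  rw [add_comm (n : ℝ) x]
  field_simp

/-! ### Two comparison principles -/

/-- If `H / R` increases along `n ≥ N` and both `H` and `R` tend to `1`, then `H N ≤ R N`. -/
lemma le_of_ratio_mono {H R : ℕ → ℝ} {N : ℕ} (hR : ∀ n ≥ N, 0 < R n)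
    (hH1 : Tendsto H atTop (𝓝 1)) (hR1 : Tendsto R atTop (𝓝 1))
    (h : ∀ n ≥ N, H n * R (n + 1) ≤ H (n + 1) * R n) : H N ≤ R N := by
  have hm : ∀ m, H N / R N ≤ H (N + m) / R (N + m) := by
    intro m
    induction m with
    | zero => simp
    | succ m ih =>
      refine ih.trans ?_
      rw [div_le_div_iff₀ (hR _ (by lia)) (hR _ (by lia))]
      exact h (N + m) (by lia)
  have hlim : Tendsto (fun n => H n / R n) atTop (𝓝 1) := by
    simpa [Pi.div_def] using hH1.div hR1 one_ne_zero
  have : H N / R N ≤ 1 :=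
    ge_of_tendsto hlim (by
      filter_upwards [eventually_ge_atTop N] with n hn
      obtain ⟨m, rfl⟩ := Nat.exists_eq_add_of_le hn
      exact hm m)
  exact (div_le_one (hR N le_rfl)).1 this

/-- Tail enclosure by telescoping: if `L n ≤ 1 + r n * L (n + 1)` and
`1 + r n * U (n + 1) ≤ U n` for `n ≥ N`, where `r` is the term ratio of the positive series
`∑ t n`, then the tail from `N` on lies between `t N * L N` and `t N * U N`. -/
lemma tsum_enclosure {t r L U : ℕ → ℝ} {N : ℕ} (ht : ∀ n, 0 < t n)
    (hr : ∀ n, t (n + 1) = r n * t n) (hU0 : ∀ n ≥ N, 0 ≤ U n)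
    (hL0 : Tendsto (fun n => t n * L n) atTop (𝓝 0))
    (hL : ∀ n ≥ N, L n ≤ 1 + r n * L (n + 1))
    (hU : ∀ n ≥ N, 1 + r n * U (n + 1) ≤ U n) :
    ∑ n ∈ Finset.range N, t n + t N * L N ≤ ∑' n, t n ∧
      ∑' n, t n ≤ ∑ n ∈ Finset.range N, t n + t N * U N := by
  have hup : ∀ m, ∑ n ∈ Finset.range m, t (n + N) ≤ t N * U N - t (N + m) * U (N + m) := by
    intro m
    induction m with
    | zero => simp
    | succ m ih =>
      rw [Finset.sum_range_succ]
      have h1 := mul_le_mul_of_nonneg_left (hU (N + m) (by lia)) (ht (N + m)).le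
      have h2 := hr (N + m)
      rw [← add_assoc, h2, add_comm m N]
      linarith
  have hlo : ∀ m, t N * L N - t (N + m) * L (N + m) ≤ ∑ n ∈ Finset.range m, t (n + N) := by
    intro m
    induction m with
    | zero => simp
    | succ m ih =>
      rw [Finset.sum_range_succ]
      have h1 := mul_le_mul_of_nonneg_left (hL (N + m) (by lia)) (ht (N + m)).le
      have h2 := hr (N + m)
      rw [← add_assoc, h2, add_comm m N]
      linarith
  have hbdd : ∀ m, ∑ n ∈ Finset.range m, t (n + N) ≤ t N * U N := fun m =>
    (hup m).trans (sub_le_self _ (mul_nonneg (ht _).le (hU0 _ (by lia))))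
  have hs' : Summable fun n => t (n + N) :=
    summable_of_sum_range_le (fun n => (ht _).le) hbdd
  have hs : Summable t := (summable_nat_add_iff N).1 hs'
  rw [← hs.sum_add_tsum_nat_add N]
  constructor
  · gcongr
    have hlim : Tendsto (fun m => t N * L N - t (N + m) * L (N + m)) atTop (𝓝 (t N * L N)) := by
      have h := hL0.comp (tendsto_add_atTop_nat N)
      simpa [Function.comp_def, add_comm] using h.const_sub (t N * L N)
    exact le_of_tendsto_of_tendsto' hlim hs'.hasSum.tendsto_sum_nat hlo
  · gcongr
    exact Real.tsum_le_of_sum_range_le (fun n => (ht _).le) hbdd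

/-! ### The hypergeometric series -/

/-- The `n`-th term of `₃F₂(a, a, c; 1, 1; 1)`. -/
noncomputable def hypTerm (a c : ℝ) (n : ℕ) : ℝ :=
  poch a n * poch a n * poch c n / (poch 1 n * poch 1 n * poch 1 n)

lemma term_pos {a c : ℝ} (ha : 0 < a) (hc : 0 < c) (n : ℕ) : 0 < hypTerm a c n := by
  have := poch_pos ha n
  have := poch_pos hc n
  have := poch_pos one_pos n
  unfold hypTerm
  positivity

lemma term_succ {a c : ℝ} (ha : 0 < a) (hc : 0 < c) (n : ℕ) :
    hypTerm a c (n + 1) = (a + n) ^ 2 * (c + n) / (1 + n) ^ 3 * hypTerm a c n := by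
  have := (poch_pos one_pos n).ne'
  have : (1 + n : ℝ) ≠ 0 := by positivity
  unfold hypTerm
  rw [poch_succ ha, poch_succ hc, poch_succ one_pos]
  field_simp

lemma term_eq_prod {a c : ℝ} (ha : 0 < a) (hc : 0 < c) (n : ℕ) :
    hypTerm a c n = ∏ i ∈ Finset.range n, (a + i) ^ 2 * (c + i) / (1 + i) ^ 3 := by
  induction n with
  | zero => simp [hypTerm, poch_zero ha, poch_zero hc, poch_zero one_pos]
  | succ n ih => rw [term_succ ha hc, Finset.prod_range_succ, ih, mul_comm]

/-- The terms are `o(1/n)` as soon as `2 a + c < 2`. -/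
lemma tendsto_term_mul {a c : ℝ} (ha : 0 < a) (hc : 0 < c) (h : 2 * a + c < 2) :
    Tendsto (fun n : ℕ => hypTerm a c n * n) atTop (𝓝 0) := by
  have hA := tendsto_Gamma_ratio ha
  have hC := tendsto_Gamma_ratio hc
  have hp : Tendsto (fun n : ℕ => (n : ℝ) ^ (-(2 - (2 * a + c)))) atTop (𝓝 0) :=
    (tendsto_rpow_neg_atTop (by linarith)).comp tendsto_natCast_atTop_atTop
  have hall := ((((hA.mul hA).mul hC).mul hp).mul_const
    (1 / (Real.Gamma a * Real.Gamma a * Real.Gamma c)))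
  simp only [mul_zero, zero_mul] at hall
  refine hall.congr' ?_
  filter_upwards [eventually_ge_atTop 1] with n hn
  have hn' : (0 : ℝ) < n := by exact_mod_cast hn
  have hGa := (Real.Gamma_pos_of_pos ha).ne'
  have hGc := (Real.Gamma_pos_of_pos hc).ne'
  have hG1 : Real.Gamma (1 + n) ≠ 0 := (Real.Gamma_pos_of_pos (by positivity)).ne'
  have hpow : (n : ℝ) ^ (-(2 - (2 * a + c))) =
      n * ((n : ℝ) ^ (a - 1) * (n : ℝ) ^ (a - 1) * (n : ℝ) ^ (c - 1)) := by
    rw [← Real.rpow_add hn', ← Real.rpow_add hn']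
    nth_rewrite 2 [← Real.rpow_one (n : ℝ)]
    rw [← Real.rpow_add hn']
    congr 1
    ring
  have h1 := (Real.rpow_pos_of_pos hn' (a - 1)).ne'
  have h2 := (Real.rpow_pos_of_pos hn' (c - 1)).ne'
  rw [hpow]
  unfold hypTerm poch
  rw [Real.Gamma_one]
  field_simp

/-- The truncated asymptotic expansion, in powers of `1/x`, of (tail)/(first term). -/
noncomputable def tailR (c₀ c₁ c₂ c₃ c₄ x : ℝ) : ℝ :=
  c₀ * x + c₁ + c₂ / x + c₃ / x ^ 2 + c₄ / x ^ 3

lemma tendsto_term_mul_tailR {a c : ℝ} (ha : 0 < a) (hc : 0 < c) (h : 2 * a + c < 2)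
    (c₀ c₁ c₂ c₃ c₄ : ℝ) :
    Tendsto (fun n : ℕ => hypTerm a c n * tailR c₀ c₁ c₂ c₃ c₄ n) atTop (𝓝 0) := by
  have hi : Tendsto (fun n : ℕ => (n : ℝ)⁻¹) atTop (𝓝 0) := tendsto_inv_atTop_nhds_zero_nat
  have hq : Tendsto (fun n : ℕ => c₀ + c₁ * (n : ℝ)⁻¹ + c₂ * (n : ℝ)⁻¹ ^ 2 +
      c₃ * (n : ℝ)⁻¹ ^ 3 + c₄ * (n : ℝ)⁻¹ ^ 4) atTop
      (𝓝 (c₀ + c₁ * 0 + c₂ * 0 ^ 2 + c₃ * 0 ^ 3 + c₄ * 0 ^ 4)) :=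
    ((((hi.const_mul _).const_add _).add ((hi.pow 2).const_mul _)).add
      ((hi.pow 3).const_mul _)).add ((hi.pow 4).const_mul _)
  have := (tendsto_term_mul ha hc h).mul hq
  rw [zero_mul] at this
  refine this.congr' ?_
  filter_upwards [eventually_ge_atTop 1] with n hn
  have hn' : (0 : ℝ) < n := by exact_mod_cast hn
  unfold tailR
  field_simp

/-- Enclosure of `₃F₂(a, a, c; 1, 1; 1)` by twenty terms and an asymptotic tail; `l` and `u`
are the values of the last coefficient of the expansion giving a lower and an upper bound. -/
lemma F32_enclosure {a c c₀ c₁ c₂ c₃ l u : ℝ} (ha : 0 < a) (hc : 0 < c) (h : 2 * a + c < 2)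
    (hU0 : ∀ y : ℝ, 0 ≤ y → 0 ≤ tailR c₀ c₁ c₂ c₃ u (20 + y))
    (hL : ∀ y : ℝ, 0 ≤ y → tailR c₀ c₁ c₂ c₃ l (20 + y) ≤
      1 + (a + (20 + y)) ^ 2 * (c + (20 + y)) / (1 + (20 + y)) ^ 3 *
        tailR c₀ c₁ c₂ c₃ l (20 + y + 1))
    (hU : ∀ y : ℝ, 0 ≤ y → 1 + (a + (20 + y)) ^ 2 * (c + (20 + y)) / (1 + (20 + y)) ^ 3 *
        tailR c₀ c₁ c₂ c₃ u (20 + y + 1) ≤ tailR c₀ c₁ c₂ c₃ u (20 + y)) :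
    ∑ n ∈ Finset.range 20, ∏ i ∈ Finset.range n, (a + i) ^ 2 * (c + i) / (1 + i) ^ 3 +
      (∏ i ∈ Finset.range 20, (a + i) ^ 2 * (c + i) / (1 + i) ^ 3) * tailR c₀ c₁ c₂ c₃ l 20 ≤
        F32 a a c 1 1 ∧
    F32 a a c 1 1 ≤
      ∑ n ∈ Finset.range 20, ∏ i ∈ Finset.range n, (a + i) ^ 2 * (c + i) / (1 + i) ^ 3 +
      (∏ i ∈ Finset.range 20, (a + i) ^ 2 * (c + i) / (1 + i) ^ 3) * tailR c₀ c₁ c₂ c₃ u 20 := by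
  have key := tsum_enclosure (t := hypTerm a c) (N := 20)
    (r := fun n => (a + n) ^ 2 * (c + n) / (1 + n) ^ 3)
    (L := fun n => tailR c₀ c₁ c₂ c₃ l n) (U := fun n => tailR c₀ c₁ c₂ c₃ u n)
    (term_pos ha hc) (term_succ ha hc)
    (fun n hn => by
      obtain ⟨m, rfl⟩ := Nat.exists_eq_add_of_le hn
      push_cast
      exact hU0 m m.cast_nonneg)
    (tendsto_term_mul_tailR ha hc h _ _ _ _ _)
    (fun n hn => by
      obtain ⟨m, rfl⟩ := Nat.exists_eq_add_of_le hn
      push_cast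
      exact hL m m.cast_nonneg)
    (fun n hn => by
      obtain ⟨m, rfl⟩ := Nat.exists_eq_add_of_le hn
      push_cast
      exact hU m m.cast_nonneg)
  simp only [term_eq_prod ha hc, Nat.cast_ofNat] at key
  have hF : F32 a a c 1 1 =
      ∑' n : ℕ, ∏ i ∈ Finset.range n, (a + i) ^ 2 * (c + i) / (1 + i : ℝ) ^ 3 := by
    simp only [← term_eq_prod ha hc]
    rfl
  rw [hF]
  exact key

/-! ### Gamma quotients -/

/-- The quotient `Γ(a + n) Γ(b + n) / (Γ(c + n) Γ(1 + n))`. -/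
noncomputable def gq (a b c : ℝ) (n : ℕ) : ℝ :=
  Real.Gamma (a + n) * Real.Gamma (b + n) / (Real.Gamma (c + n) * Real.Gamma (1 + n))

lemma gq_pos {a b c : ℝ} (ha : 0 < a) (hb : 0 < b) (hc : 0 < c) (n : ℕ) : 0 < gq a b c n := by
  have := Real.Gamma_pos_of_pos (show 0 < a + n by positivity)
  have := Real.Gamma_pos_of_pos (show 0 < b + n by positivity)
  have := Real.Gamma_pos_of_pos (show 0 < c + n by positivity)
  have := Real.Gamma_pos_of_pos (show (0 : ℝ) < 1 + n by positivity)
  unfold gq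
  positivity

lemma gq_succ {a b c : ℝ} (ha : 0 < a) (hb : 0 < b) (hc : 0 < c) (n : ℕ) :
    gq a b c (n + 1) = (a + n) * (b + n) / ((c + n) * (1 + n)) * gq a b c n := by
  unfold gq
  simp only [Nat.cast_succ, ← add_assoc]
  rw [Real.Gamma_add_one (show a + n ≠ 0 by positivity),
    Real.Gamma_add_one (show b + n ≠ 0 by positivity),
    Real.Gamma_add_one (show c + n ≠ 0 by positivity),
    Real.Gamma_add_one (show (1 : ℝ) + n ≠ 0 by positivity), div_mul_div_comm]
  congr 1 <;> ring

lemma gq_eq_prod {a b c : ℝ} (ha : 0 < a) (hb : 0 < b) (hc : 0 < c) (n : ℕ) :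
    gq a b c n =
      gq a b c 0 * ∏ i ∈ Finset.range n, (a + i) * (b + i) / ((c + i) * (1 + i)) := by
  induction n with
  | zero => simp
  | succ n ih => rw [gq_succ ha hb hc, Finset.prod_range_succ, ih]; ring

/-- `gq a b c n ~ n ^ (a + b - c - 1)`, in a form free of fractional powers. -/
lemma tendsto_gq {a b c : ℝ} {e : ℤ} (ha : 0 < a) (hb : 0 < b) (hc : 0 < c)
    (he : 7 * (a + b - c - 1) = -e) :
    Tendsto (fun n : ℕ => gq a b c n ^ 7 * (n : ℝ) ^ e) atTop (𝓝 1) := by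
  have h := (((tendsto_Gamma_ratio ha).mul (tendsto_Gamma_ratio hb)).div
    (tendsto_Gamma_ratio hc) one_ne_zero).pow 7
  simp only [mul_one, div_one, one_pow] at h
  refine h.congr' ?_
  filter_upwards [eventually_ge_atTop 1] with n hn
  have hn' : (0 : ℝ) < n := by exact_mod_cast hn
  have hpow : (n : ℝ) ^ e = ((n : ℝ) ^ (c - 1) / ((n : ℝ) ^ (a - 1) * (n : ℝ) ^ (b - 1))) ^ 7 := by
    rw [← Real.rpow_add hn', ← Real.rpow_sub hn', ← Real.rpow_natCast, ← Real.rpow_mul hn'.le,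
      ← Real.rpow_intCast]
    congr 1
    push_cast
    linarith
  have h1 := (Real.rpow_pos_of_pos hn' (a - 1)).ne'
  have h2 := (Real.rpow_pos_of_pos hn' (b - 1)).ne'
  have h3 := (Real.rpow_pos_of_pos hn' (c - 1)).ne'
  have := (Real.Gamma_pos_of_pos (show 0 < c + n by positivity)).ne'
  have := (Real.Gamma_pos_of_pos (show (0 : ℝ) < 1 + n by positivity)).ne'
  rw [hpow, ← mul_pow]
  congr 1
  simp only [Pi.div_apply]
  unfold gq
  field_simp

/-- The truncated asymptotic expansion of `gq a b c x ^ 7 * x ^ e` in powers of `1 / (7 x)`. -/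
noncomputable def gqR (c₁ c₂ c₃ c₄ x : ℝ) : ℝ :=
  1 + c₁ / (7 * x) + c₂ / (7 * x) ^ 2 + c₃ / (7 * x) ^ 3 + c₄ / (7 * x) ^ 4

lemma tendsto_gqR (c₁ c₂ c₃ c₄ : ℝ) :
    Tendsto (fun n : ℕ => gqR c₁ c₂ c₃ c₄ n) atTop (𝓝 1) := by
  have hi : Tendsto (fun n : ℕ => (7 * (n : ℝ))⁻¹) atTop (𝓝 0) := by
    simpa [mul_inv] using (tendsto_inv_atTop_nhds_zero_nat (𝕜 := ℝ)).mul_const (7⁻¹ : ℝ)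
  have h := ((((hi.const_mul c₁).const_add 1).add ((hi.pow 2).const_mul c₂)).add
    ((hi.pow 3).const_mul c₃)).add ((hi.pow 4).const_mul c₄)
  simp only [mul_zero, add_zero, ne_eq, OfNat.ofNat_ne_zero, not_false_eq_true, zero_pow] at h
  refine h.congr fun n => ?_
  simp only [gqR, div_eq_mul_inv, inv_pow]

/-- Multiplies the one-step inequality of `gq_enclosure` by `g` and reorders the factors. -/
lemma le_rearrange {g q s s' r r' : ℝ} (hg : 0 ≤ g) (h : q * s' * r ≤ s * r') :
    r * (q * g * s') ≤ r' * (g * s) := by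
  linarith [mul_le_mul_of_nonneg_left h hg]

lemma le_rearrange' {g q s s' r r' : ℝ} (hg : 0 ≤ g) (h : s * r' ≤ q * s' * r) :
    g * s * r' ≤ q * g * s' * r := by
  linarith [mul_le_mul_of_nonneg_left h hg]

/-- Enclosure of `Γ(a) Γ(b) / Γ(c)`: shift the arguments by `128` and use the expansion there;
`l` and `u` are the values of its last coefficient giving a lower and an upper bound. -/
lemma gq_enclosure {a b c c₁ c₂ c₃ l u : ℝ} {e : ℤ} (ha : 0 < a) (hb : 0 < b) (hc : 0 < c)
    (he : 7 * (a + b - c - 1) = -e)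
    (hU0 : ∀ y : ℝ, 0 ≤ y → 0 < gqR c₁ c₂ c₃ u (128 + y))
    (hL : ∀ y : ℝ, 0 ≤ y →
      ((a + (128 + y)) * (b + (128 + y)) / ((c + (128 + y)) * (1 + (128 + y)))) ^ 7 *
        (128 + y + 1) ^ e * gqR c₁ c₂ c₃ l (128 + y) ≤
          (128 + y) ^ e * gqR c₁ c₂ c₃ l (128 + y + 1))
    (hU : ∀ y : ℝ, 0 ≤ y → (128 + y) ^ e * gqR c₁ c₂ c₃ u (128 + y + 1) ≤
      ((a + (128 + y)) * (b + (128 + y)) / ((c + (128 + y)) * (1 + (128 + y)))) ^ 7 *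
        (128 + y + 1) ^ e * gqR c₁ c₂ c₃ u (128 + y)) :
    gqR c₁ c₂ c₃ l 128 ≤ (gq a b c 0 *
      ∏ i ∈ Finset.range 128, (a + i) * (b + i) / ((c + i) * (1 + i))) ^ 7 * 128 ^ e ∧
    (gq a b c 0 *
      ∏ i ∈ Finset.range 128, (a + i) * (b + i) / ((c + i) * (1 + i))) ^ 7 * 128 ^ e ≤
        gqR c₁ c₂ c₃ u 128 := by
  rw [← gq_eq_prod ha hb hc]
  have hlim := tendsto_gq ha hb hc he
  constructor
  · have h := le_of_ratio_mono (N := 128) (H := fun n => gqR c₁ c₂ c₃ l n)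
      (R := fun n : ℕ => gq a b c n ^ 7 * (n : ℝ) ^ e) ?_ (tendsto_gqR _ _ _ _) hlim ?_
    · simpa using h
    · intro n hn
      have := gq_pos ha hb hc n
      have : (0 : ℝ) < n := by exact_mod_cast (show 0 < n by lia)
      positivity
    · intro n hn
      obtain ⟨m, rfl⟩ := Nat.exists_eq_add_of_le hn
      rw [gq_succ ha hb hc]
      push_cast
      rw [mul_pow]
      exact le_rearrange (pow_pos (gq_pos ha hb hc _) 7).le (hL m m.cast_nonneg)
  · have h := le_of_ratio_mono (N := 128) (R := fun n => gqR c₁ c₂ c₃ u n)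
      (H := fun n : ℕ => gq a b c n ^ 7 * (n : ℝ) ^ e) ?_ hlim (tendsto_gqR _ _ _ _) ?_
    · simpa using h
    · intro n hn
      obtain ⟨m, rfl⟩ := Nat.exists_eq_add_of_le hn
      push_cast
      exact hU0 m m.cast_nonneg
    · intro n hn
      obtain ⟨m, rfl⟩ := Nat.exists_eq_add_of_le hn
      rw [gq_succ ha hb hc]
      push_cast
      rw [mul_pow]
      exact le_rearrange' (pow_pos (gq_pos ha hb hc _) 7).le (hU m m.cast_nonneg)

/-- Extraction of the seventh root in `gq_enclosure`. -/
lemma le_of_pow_seven {A B P w R : ℝ} (hB : 0 ≤ B) (hP : 0 < P) (hw : 0 < w)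
    (h1 : (A * P) ^ 7 * w ≤ R) (h2 : R ≤ (B * P) ^ 7 * w) : A ≤ B := by
  have h := le_of_mul_le_mul_right (h1.trans h2) hw
  exact le_of_mul_le_mul_right (le_of_pow_le_pow_left₀ (by norm_num) (by positivity) h) hP

/-! ### Numerical enclosures

The coefficients are those of the formal solution of the recursion satisfied by each expansion;
the last one is replaced by nearby values on either side of the true one. Each one-step inequality
becomes, after clearing denominators, a polynomial in `y ≥ 0` with nonnegative coefficients. -/

lemma F32_bounds_one : 1.018952449205 ≤ F32 (1 / 7) (1 / 7) (4 / 7) 1 1 ∧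
    F32 (1 / 7) (1 / 7) (4 / 7) 1 1 ≤ 1.018952449219 := by
  have key := F32_enclosure (a := 1 / 7) (c := 4 / 7) (c₀ := 7 / 8) (c₁ := 3 / 5)
    (c₂ := 27 / 140) (c₃ := -135 / 5684) (l := -44 / 1000) (u := -40 / 1000)
    (by norm_num) (by norm_num) (by norm_num) ?_ ?_ ?_
  · constructor
    · refine le_trans ?_ key.1
      simp only [Finset.sum_range_succ, Finset.prod_range_succ, tailR]
      norm_num
    · refine key.2.trans ?_
      simp only [Finset.sum_range_succ, Finset.prod_range_succ, tailR]
      norm_num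
  · intro y hy
    unfold tailR
    rw [← sub_nonneg]
    field_simp
    ring_nf
    positivity
  · intro y hy
    unfold tailR
    rw [← sub_nonneg]
    field_simp
    ring_nf
    positivity
  · intro y hy
    unfold tailR
    rw [← sub_nonneg]
    field_simp
    ring_nf
    positivity

lemma F32_bounds_two : 1.017828598405 ≤ F32 (2 / 7) (2 / 7) (1 / 7) 1 1 ∧
    F32 (2 / 7) (2 / 7) (1 / 7) 1 1 ≤ 1.017828598416 := by
  have key := F32_enclosure (a := 2 / 7) (c := 1 / 7) (c₀ := 7 / 9) (c₁ := 85 / 144)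
    (c₂ := 4825 / 23184) (c₃ := -3985 / 162288) (l := -53 / 1000) (u := -48 / 1000)
    (by norm_num) (by norm_num) (by norm_num) ?_ ?_ ?_
  · constructor
    · refine le_trans ?_ key.1
      simp only [Finset.sum_range_succ, Finset.prod_range_succ, tailR]
      norm_num
    · refine key.2.trans ?_
      simp only [Finset.sum_range_succ, Finset.prod_range_succ, tailR]
      norm_num
  · intro y hy
    unfold tailR
    rw [← sub_nonneg]
    field_simp
    ring_nf
    positivity
  · intro y hy
    unfold tailR
    rw [← sub_nonneg]
    field_simp
    ring_nf
    positivity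
  · intro y hy
    unfold tailR
    rw [← sub_nonneg]
    field_simp
    ring_nf
    positivity

lemma F32_bounds_four : 1.258665620492 ≤ F32 (4 / 7) (4 / 7) (2 / 7) 1 1 ∧
    F32 (4 / 7) (4 / 7) (2 / 7) 1 1 ≤ 1.258665621073 := by
  have key := F32_enclosure (a := 4 / 7) (c := 2 / 7) (c₀ := 7 / 4) (c₁ := 39 / 44)
    (c₂ := 57 / 308) (c₃ := -93 / 2156) (l := -27 / 1000) (u := -23 / 1000)
    (by norm_num) (by norm_num) (by norm_num) ?_ ?_ ?_
  · constructor
    · refine le_trans ?_ key.1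
      simp only [Finset.sum_range_succ, Finset.prod_range_succ, tailR]
      norm_num
    · refine key.2.trans ?_
      simp only [Finset.sum_range_succ, Finset.prod_range_succ, tailR]
      norm_num
  · intro y hy
    unfold tailR
    rw [← sub_nonneg]
    field_simp
    ring_nf
    positivity
  · intro y hy
    unfold tailR
    rw [← sub_nonneg]
    field_simp
    ring_nf
    positivity
  · intro y hy
    unfold tailR
    rw [← sub_nonneg]
    field_simp
    ring_nf
    positivity

lemma gq_bounds_one : 0.837736862875 ≤ gq (5 / 7) (3 / 7) (2 / 7) 0 ∧
    gq (5 / 7) (3 / 7) (2 / 7) 0 ≤ 0.837736862877 := by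
  have hP : (0 : ℝ) < ∏ i ∈ Finset.range 128,
      ((5 / 7 : ℝ) + i) * (3 / 7 + i) / ((2 / 7 + i) * (1 + i)) :=
    Finset.prod_pos fun i _ => by positivity
  have key := gq_enclosure (a := 5 / 7) (b := 3 / 7) (c := 2 / 7) (e := 1)
    (c₁ := -6) (c₂ := 22) (c₃ := -48) (l := 30) (u := 32)
    (by norm_num) (by norm_num) (by norm_num) (by norm_num) ?_ ?_ ?_
  · constructor
    · refine le_of_pow_seven (gq_pos (by norm_num) (by norm_num) (by norm_num) 0).le hP
        (by norm_num) ?_ key.1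
      unfold gqR
      norm_num
    · refine le_of_pow_seven (by norm_num) hP (by norm_num) key.2 ?_
      unfold gqR
      norm_num
  · intro y hy
    unfold gqR
    field_simp
    ring_nf
    positivity
  · intro y hy
    unfold gqR
    simp only [zpow_one]
    rw [← sub_nonneg]
    field_simp
    ring_nf
    positivity
  · intro y hy
    unfold gqR
    simp only [zpow_one]
    rw [← sub_nonneg]
    field_simp
    ring_nf
    positivity

lemma gq_bounds_two : 1.466838323207 ≤ gq (3 / 7) (6 / 7) (4 / 7) 0 ∧
    gq (3 / 7) (6 / 7) (4 / 7) 0 ≤ 1.466838323208 := by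
  have hP : (0 : ℝ) < ∏ i ∈ Finset.range 128,
      ((3 / 7 : ℝ) + i) * (6 / 7 + i) / ((4 / 7 + i) * (1 + i)) :=
    Finset.prod_pos fun i _ => by positivity
  have key := gq_enclosure (a := 3 / 7) (b := 6 / 7) (c := 4 / 7) (e := 2)
    (c₁ := -3) (c₂ := 5) (c₃ := -3) (l := -4) (u := -2)
    (by norm_num) (by norm_num) (by norm_num) (by norm_num) ?_ ?_ ?_
  · constructor
    · refine le_of_pow_seven (gq_pos (by norm_num) (by norm_num) (by norm_num) 0).le hP
        (by norm_num) ?_ key.1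
      unfold gqR
      norm_num
    · refine le_of_pow_seven (by norm_num) hP (by norm_num) key.2 ?_
      unfold gqR
      norm_num
  · intro y hy
    unfold gqR
    field_simp
    ring_nf
    positivity
  · intro y hy
    unfold gqR
    simp only [zpow_ofNat]
    rw [← sub_nonneg]
    field_simp
    ring_nf
    positivity
  · intro y hy
    unfold gqR
    simp only [zpow_ofNat]
    rw [← sub_nonneg]
    field_simp
    ring_nf
    positivity

lemma gq_bounds_four : 0.215476041994 ≤ gq (6 / 7) (5 / 7) (1 / 7) 0 ∧
    gq (6 / 7) (5 / 7) (1 / 7) 0 ≤ 0.215476041995 := by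
  have hP : (0 : ℝ) < ∏ i ∈ Finset.range 128,
      ((6 / 7 : ℝ) + i) * (5 / 7 + i) / ((1 / 7 + i) * (1 + i)) :=
    Finset.prod_pos fun i _ => by positivity
  have key := gq_enclosure (a := 6 / 7) (b := 5 / 7) (c := 1 / 7) (e := -3)
    (c₁ := -5) (c₂ := 20) (c₃ := -50) (l := 52) (u := 54)
    (by norm_num) (by norm_num) (by norm_num) (by norm_num) ?_ ?_ ?_
  · constructor
    · refine le_of_pow_seven (gq_pos (by norm_num) (by norm_num) (by norm_num) 0).le hP
        (by norm_num) ?_ key.1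
      unfold gqR
      norm_num
    · refine le_of_pow_seven (by norm_num) hP (by norm_num) key.2 ?_
      unfold gqR
      norm_num
  · intro y hy
    unfold gqR
    field_simp
    ring_nf
    positivity
  · intro y hy
    unfold gqR
    simp only [zpow_neg, zpow_ofNat]
    rw [← sub_nonneg]
    field_simp
    ring_nf
    positivity
  · intro y hy
    unfold gqR
    simp only [zpow_neg, zpow_ofNat]
    rw [← sub_nonneg]
    field_simp
    ring_nf
    positivity

/-! ### Conclusion -/

/-- Here `4802 = 2! * 7 ^ 4` is the factor for `k = 2`, and `4802 * f7 ≈ 3348482649.8212`. -/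
lemma f7_bounds : 3348482649 < 4802 * f7 ∧ 4802 * f7 < 3348482650 := by
  have hf : f7 = 2 * 7 ^ 6 *
      (gq (5 / 7) (3 / 7) (2 / 7) 0 ^ 2 * F32 (1 / 7) (1 / 7) (4 / 7) 1 1 +
      gq (3 / 7) (6 / 7) (4 / 7) 0 ^ 2 * F32 (2 / 7) (2 / 7) (1 / 7) 1 1 +
      gq (6 / 7) (5 / 7) (1 / 7) 0 ^ 2 * F32 (4 / 7) (4 / 7) (2 / 7) 1 1) := by
    unfold f7 gq
    rw [Finset.sum_insert (by decide), Finset.sum_insert (by decide), Finset.sum_singleton]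
    norm_num [Real.Gamma_one, add_assoc]
  obtain ⟨a1, a2⟩ := gq_bounds_one
  obtain ⟨b1, b2⟩ := gq_bounds_two
  obtain ⟨c1, c2⟩ := gq_bounds_four
  obtain ⟨u1, u2⟩ := F32_bounds_one
  obtain ⟨v1, v2⟩ := F32_bounds_two
  obtain ⟨w1, w2⟩ := F32_bounds_four
  have a0 := gq_pos (a := 5 / 7) (b := 3 / 7) (c := 2 / 7)
    (by norm_num) (by norm_num) (by norm_num) 0
  have b0 := gq_pos (a := 3 / 7) (b := 6 / 7) (c := 4 / 7)
    (by norm_num) (by norm_num) (by norm_num) 0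
  have c0 := gq_pos (a := 6 / 7) (b := 5 / 7) (c := 1 / 7)
    (by norm_num) (by norm_num) (by norm_num) 0
  rw [hf]
  generalize gq (5 / 7) (3 / 7) (2 / 7) 0 = A at *
  generalize gq (3 / 7) (6 / 7) (4 / 7) 0 = B at *
  generalize gq (6 / 7) (5 / 7) (1 / 7) 0 = C at *
  generalize F32 (1 / 7) (1 / 7) (4 / 7) 1 1 = U at *
  generalize F32 (2 / 7) (2 / 7) (1 / 7) 1 1 = V at *
  generalize F32 (4 / 7) (4 / 7) (2 / 7) 1 1 = W at *
  constructor
  · calc (3348482649 : ℝ) < 4802 * (2 * 7 ^ 6 * (0.837736862875 ^ 2 * 1.018952449205 +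
          1.466838323207 ^ 2 * 1.017828598405 + 0.215476041994 ^ 2 * 1.258665620492)) := by
          norm_num
      _ ≤ _ := by gcongr
  · calc 4802 * (2 * 7 ^ 6 * (A ^ 2 * U + B ^ 2 * V + C ^ 2 * W))
        ≤ 4802 * (2 * 7 ^ 6 * (0.837736862877 ^ 2 * 1.018952449219 +
          1.466838323208 ^ 2 * 1.017828598416 + 0.215476041995 ^ 2 * 1.258665621073)) := by
          have : 0 ≤ U := le_trans (by norm_num) u1
          have : 0 ≤ V := le_trans (by norm_num) v1
          have : 0 ≤ W := le_trans (by norm_num) w1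
          gcongr
      _ < 3348482650 := by norm_num

/-- For every integer k with 1 ≤ k ≤ 2, the real number k!·7^{4k−4}·f(7) (the value
f(7,k) of the paper) is not an integer. -/
theorem stmt_13 (k : ℕ) (hk1 : 1 ≤ k) (hk2 : k ≤ 2) :
    ¬ ∃ z : ℤ, (z : ℝ) = (k.factorial : ℝ) * 7 ^ (4 * k - 4) * f7 := by
  obtain ⟨h1, h2⟩ := f7_bounds
  -- No integer equals `4802 * f7`, since it lies strictly between two consecutive integers.
  have no_int : ∀ z : ℤ, (z : ℝ) ≠ 4802 * f7 := by
    intro z hz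
    rw [← hz] at h1 h2
    have h1' : (3348482649 : ℤ) < z := by exact_mod_cast h1
    have h2' : z < (3348482650 : ℤ) := by exact_mod_cast h2
    lia
  rintro ⟨z, hz⟩
  interval_cases k
  · refine no_int (4802 * z) ?_
    push_cast
    rw [hz]
    norm_num
  · refine no_int z ?_
    rw [hz]
    norm_num [Nat.factorial]
end
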